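/- arXiv:2403.02849 — 5 statements merged into one kernel-verified Lean document; each statement's English description precedes it below -/
import Mathlib

section
/- For every countable abelian group G there exists an injective ℤ-linear map T : (ℕ →₀ ℤ) →ₗ[ℤ] (ℕ →₀ ℤ) such that the quotient (ℕ →₀ ℤ) ⧸ (LinearMap.range T) is isomorphic to G as an additive group. -/
/-!
If a module `M` is generated by a family indexed by an infinite set `ι`, the free module `F` on `ι`
maps onto it; precomposing with a projection `F ≃ F × F → F` makes the kernel at least as large
as `F`. Over a principal ideal domain the kernel is free, so it is isomorphic to `F`, and its
inclusion becomes the endomorphism.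

For the freeness of a submodule `K` of `ι →₀ R`, well-order `ι` and consider, for each `i`, the
ideal of `i`-th coefficients of the elements of `K` supported on `Set.Iic i`. Elements of `K`
realising generators of the nonzero ones among these ideals form a triangular basis of `K`.
-/

section LeadingCoeffs

variable {ι R M : Type*} [LinearOrder ι] [Ring R] [AddCommGroup M] [Module R M]

/-- The submodule of leading coefficients of elements of `K` at `i`: the `i`-th coefficients of the
elements of `K` supported on `Set.Iic i`, with `0` allowed so that they form a submodule. -/
noncomputable def leadingCoeffs (K : Submodule R (ι →₀ M)) (i : ι) : Submodule R M :=
  (K ⊓ Finsupp.supported M R (Set.Iic i)).map (Finsupp.lapply i)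

theorem mem_leadingCoeffs {K : Submodule R (ι →₀ M)} {i : ι} {a : M} :
    a ∈ leadingCoeffs K i ↔ ∃ x ∈ K, x ∈ Finsupp.supported M R (Set.Iic i) ∧ x i = a := by
  simp only [leadingCoeffs, Submodule.mem_map, Submodule.mem_inf, Finsupp.lapply_apply, and_assoc]

variable (R) in
theorem exists_mem_support_mem_supported_Iic {x : ι →₀ M} (hx : x ≠ 0) :
    ∃ i ∈ x.support, x ∈ Finsupp.supported M R (Set.Iic i) :=
  have hne := Finsupp.support_nonempty_iff.2 hx
  ⟨x.support.max' hne, x.support.max'_mem hne, fun j hj => x.support.le_max' j hj⟩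

theorem le_of_leadingCoeffs_le [WellFoundedLT ι] {N K : Submodule R (ι →₀ M)} (hNK : N ≤ K)
    (h : ∀ i, leadingCoeffs K i ≤ leadingCoeffs N i) : K ≤ N := by
  have mem_of_supported : ∀ i, ∀ x ∈ K, x ∈ Finsupp.supported M R (Set.Iic i) → x ∈ N := by
    intro i
    induction i using WellFoundedLT.induction with
    | ind i ih =>
      intro x hxK hxi
      have hlead : x i ∈ leadingCoeffs K i := mem_leadingCoeffs.2 ⟨x, hxK, hxi, rfl⟩
      obtain ⟨y, hyN, hyi, hyx⟩ := mem_leadingCoeffs.1 (h i hlead)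
      suffices hsub : x - y ∈ N from (N.sub_mem_iff_left hyN).1 hsub
      rcases eq_or_ne (x - y) 0 with hzero | hne
      · exact hzero ▸ N.zero_mem
      obtain ⟨j, hj, hsupp⟩ := exists_mem_support_mem_supported_Iic R hne
      have hji : j ≠ i := by
        rintro rfl
        simp [hyx] at hj
      have hle : j ≤ i := Submodule.sub_mem _ hxi hyi hj
      exact ih j (hle.lt_of_ne hji) (x - y) (K.sub_mem hxK (hNK hyN)) hsupp
  intro x hx
  rcases eq_or_ne x 0 with rfl | hne
  · exact N.zero_mem
  obtain ⟨i, -, hsupp⟩ := exists_mem_support_mem_supported_Iic R hne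
  exact mem_of_supported i x hx hsupp

theorem linearIndependent_of_triangular [NoZeroDivisors R] {v : ι → M} (f : ι → M →ₗ[R] R)
    (hzero : ∀ i j, i < j → f j (v i) = 0) (hdiag : ∀ i, f i (v i) ≠ 0) :
    LinearIndependent R v := by
  refine linearIndependent_iff.2 fun c hc => by_contra fun hne => ?_
  obtain ⟨m, hm, hmax⟩ := exists_mem_support_mem_supported_Iic R hne
  have hcoeff : f m (Finsupp.linearCombination R v c) = c m * f m (v m) := by
    rw [Finsupp.linearCombination_apply, map_finsuppSum, Finsupp.sum,
      Finset.sum_eq_single_of_mem m hm, map_smul, smul_eq_mul]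
    intro i hi him
    rw [map_smul, hzero i m ((hmax hi).lt_of_ne him), smul_zero]
  rw [hc, map_zero] at hcoeff
  exact mul_ne_zero (Finsupp.mem_support_iff.1 hm) (hdiag m) hcoeff.symm

end LeadingCoeffs

section PrincipalIdealDomain

variable {R : Type*} [Ring R] [IsDomain R] [IsPrincipalIdealRing R]

theorem module_free_submodule_finsupp {ι : Type*} (K : Submodule R (ι →₀ R)) :
    Module.Free R K := by
  obtain ⟨_, _⟩ := exists_wellFoundedLT ι
  choose x hxK hx hgen using fun i =>
    mem_leadingCoeffs.1 (Submodule.IsPrincipal.generator_mem (leadingCoeffs K i))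
  let v : {i // x i i ≠ 0} → ι →₀ R := fun i => x i
  have hli : LinearIndependent R v := by
    refine linearIndependent_of_triangular (fun i => Finsupp.lapply i.1) (fun i j hij => ?_)
      fun i => i.2
    exact (Finsupp.mem_supported' R _).1 (hx i) j hij.not_ge
  have hvK : Submodule.span R (Set.range v) ≤ K :=
    Submodule.span_le.2 (Set.range_subset_iff.2 fun i => hxK i)
  have hlead (i : ι) : leadingCoeffs K i ≤ leadingCoeffs (Submodule.span R (Set.range v)) i := by
    rw [← Submodule.IsPrincipal.span_singleton_generator (leadingCoeffs K i),
      Submodule.span_singleton_le_iff_mem, ← hgen i]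
    by_cases hi : x i i = 0
    · rw [hi]
      exact Submodule.zero_mem _
    · exact mem_leadingCoeffs.2 ⟨x i, Submodule.subset_span ⟨⟨i, hi⟩, rfl⟩, hx i, rfl⟩
  rw [(le_of_leadingCoeffs_le hvK hlead).antisymm hvK]
  exact Module.Free.of_basis (Module.Basis.span hli)

variable {F : Type*} [AddCommGroup F] [Module R F] [Module.Free R F]

theorem module_free_submodule (K : Submodule R F) : Module.Free R K :=
  have e := (Module.Free.chooseBasis R F).repr
  have := module_free_submodule_finsupp (K.map e.toLinearMap)
  Module.Free.of_equiv (e.submoduleMap K).symm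

theorem nonempty_linearEquiv_submodule_of_injective {K : Submodule R F} (g : F →ₗ[R] K)
    (hg : Function.Injective g) : Nonempty (F ≃ₗ[R] K) :=
  have := module_free_submodule K
  nonempty_linearEquiv_of_rank_eq ((LinearMap.rank_le_of_injective g hg).antisymm K.rank_le)

theorem exists_injective_quotient_range_linearEquiv {M : Type*} [AddCommGroup M] [Module R M]
    (e : F ≃ₗ[R] F × F) (p : F →ₗ[R] M) (hp : Function.Surjective p) :
    ∃ T : F →ₗ[R] F, Function.Injective T ∧ Nonempty ((F ⧸ LinearMap.range T) ≃ₗ[R] M) := by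
  let q : F →ₗ[R] M := p ∘ₗ LinearMap.snd R F F ∘ₗ e.toLinearMap
  have hq : Function.Surjective q := hp.comp (Prod.snd_surjective.comp e.surjective)
  let g : F →ₗ[R] LinearMap.ker q :=
    (e.symm.toLinearMap ∘ₗ LinearMap.inl R F F).codRestrict _ fun x => by simp [q]
  have hg : Function.Injective g := fun x y hxy =>
    LinearMap.inl_injective (e.symm.injective (congrArg Subtype.val hxy))
  obtain ⟨u⟩ := nonempty_linearEquiv_submodule_of_injective g hg
  let T : F →ₗ[R] F := (LinearMap.ker q).subtype ∘ₗ u.toLinearMap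
  have hT : LinearMap.range T = LinearMap.ker q := by
    rw [LinearMap.range_comp_of_range_eq_top _ u.range, Submodule.range_subtype]
  exact ⟨T, Subtype.val_injective.comp u.injective,
    ⟨Submodule.quotEquivOfEq _ _ hT ≪≫ₗ q.quotKerEquivOfSurjective hq⟩⟩

end PrincipalIdealDomain

theorem nonempty_finsupp_linearEquiv_prod (ι R : Type*) [Infinite ι] [Semiring R] :
    Nonempty ((ι →₀ R) ≃ₗ[R] (ι →₀ R) × (ι →₀ R)) := by
  have hcard : Cardinal.mk ι = Cardinal.mk (ι ⊕ ι) := by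
    simp [Cardinal.add_eq_self (Cardinal.aleph0_le_mk ι)]
  obtain ⟨e⟩ := Cardinal.eq.1 hcard
  exact ⟨Finsupp.domLCongr e ≪≫ₗ Finsupp.sumFinsuppLEquivProdFinsupp R⟩

theorem stmt_0_general {R ι M : Type*} [Ring R] [IsDomain R] [IsPrincipalIdealRing R] [Infinite ι]
    [AddCommGroup M] [Module R M] (v : ι → M) (hv : Submodule.span R (Set.range v) = ⊤) :
    ∃ T : (ι →₀ R) →ₗ[R] (ι →₀ R), Function.Injective T ∧
      Nonempty (((ι →₀ R) ⧸ LinearMap.range T) ≃ₗ[R] M) := by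
  obtain ⟨e⟩ := nonempty_finsupp_linearEquiv_prod ι R
  have hsurj : Function.Surjective (Finsupp.linearCombination R v) :=
    LinearMap.range_eq_top.1 ((Finsupp.range_linearCombination R).trans hv)
  exact exists_injective_quotient_range_linearEquiv e _ hsurj

/-- Every countable abelian group is the cokernel of an injective endomorphism of the
free abelian group `ℕ →₀ ℤ` on countably many generators. -/
theorem stmt_0 (G : Type*) [AddCommGroup G] [Countable G] :
    ∃ T : (ℕ →₀ ℤ) →ₗ[ℤ] (ℕ →₀ ℤ), Function.Injective T ∧
      Nonempty (((ℕ →₀ ℤ) ⧸ LinearMap.range T) ≃+ G) := by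
  obtain ⟨v, hv⟩ := exists_surjective_nat G
  obtain ⟨T, hT, ⟨e⟩⟩ := stmt_0_general v (hv.range_eq ▸ Submodule.span_univ (R := ℤ))
  exact ⟨T, hT, ⟨e.toAddEquiv⟩⟩
end

section
/- Let R be a commutative ring, M an R-module, T, Y : M →ₗ[R] M linear endomorphisms, and c ∈ R. Define F : M × M →ₗ[R] M × M by F (x, y) = (−(c • x) − T y − c • (Y y), −x − Y y). Then the kernel of F is isomorphic as an R-module to the kernel of T; in particular, F is injective if and only if T is injective. -/
/-! Up to sign, `F` is the block map `[[c, T + c Y], [1, Y]]`. Its lower left entry is invertible,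
so block elimination identifies the kernel of `F` with that of the Schur complement
`(T + c Y) - c Y = T`. -/

section SchurComplement

variable {R M N P Q : Type*} [Ring R] [AddCommGroup M] [AddCommGroup N] [AddCommGroup P]
  [AddCommGroup Q] [Module R M] [Module R N] [Module R P] [Module R Q]

/-- The Schur complement, with respect to the invertible lower left entry `C`, of the block map
`[[A, B], [C, D]] : N × M → P × Q`. -/
def schurComplement (A : N →ₗ[R] P) (B : M →ₗ[R] P) (C : N ≃ₗ[R] Q) (D : M →ₗ[R] Q) :
    M →ₗ[R] P :=
  B - A ∘ₗ C.symm ∘ₗ D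

variable (A : N →ₗ[R] P) (B : M →ₗ[R] P) (C : N ≃ₗ[R] Q) (D : M →ₗ[R] Q)

theorem mem_ker_block_iff (x : N) (y : M) :
    (x, y) ∈ LinearMap.ker ((A.coprod B).prod ((C : N →ₗ[R] Q).coprod D)) ↔
      x = -C.symm (D y) ∧ y ∈ LinearMap.ker (schurComplement A B C D) := by
  have second_row : C x + D y = 0 ↔ x = -C.symm (D y) := by
    rw [add_eq_zero_iff_eq_neg, ← LinearEquiv.eq_symm_apply, map_neg]
  have first_row (hx : x = -C.symm (D y)) : A x + B y = schurComplement A B C D y := by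
    simp [hx, schurComplement, neg_add_eq_sub]
  calc (x, y) ∈ LinearMap.ker ((A.coprod B).prod ((C : N →ₗ[R] Q).coprod D))
    _ ↔ A x + B y = 0 ∧ C x + D y = 0 := by simp
    _ ↔ x = -C.symm (D y) ∧ A x + B y = 0 := by rw [second_row, and_comm]
    _ ↔ x = -C.symm (D y) ∧ schurComplement A B C D y = 0 :=
      and_congr_right fun hx ↦ by rw [first_row hx]

/-- Block elimination: the projection to `M` restricts to an isomorphism from the kernel of
`[[A, B], [C, D]]` to that of its Schur complement, with inverse `y ↦ (-C⁻¹ D y, y)`. -/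
def kerBlockEquivKerSchurComplement :
    LinearMap.ker ((A.coprod B).prod ((C : N →ₗ[R] Q).coprod D)) ≃ₗ[R]
      LinearMap.ker (schurComplement A B C D) where
  toFun p := ⟨p.1.2, ((mem_ker_block_iff A B C D _ _).1 p.2).2⟩
  map_add' _ _ := rfl
  map_smul' _ _ := rfl
  invFun y := ⟨(-C.symm (D y), y), (mem_ker_block_iff A B C D _ _).2 ⟨rfl, y.2⟩⟩
  left_inv p := Subtype.ext (Prod.ext ((mem_ker_block_iff A B C D _ _).1 p.2).1.symm rfl)
  right_inv _ := rfl

end SchurComplement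

theorem injective_iff_injective_of_ker_equiv {R S M N M' N' : Type*} [Ring R] [Ring S]
    [AddCommGroup M] [AddCommGroup N] [AddCommGroup M'] [AddCommGroup N']
    [Module R M] [Module R N] [Module S M'] [Module S N']
    {f : M →ₗ[R] N} {g : M' →ₗ[S] N'} (e : LinearMap.ker f ≃ LinearMap.ker g) :
    Function.Injective f ↔ Function.Injective g := by
  simp only [← LinearMap.ker_eq_bot, ← Submodule.subsingleton_iff_eq_bot, e.subsingleton_congr]

theorem stmt_2_general {R M N P : Type*} [Ring R] [AddCommGroup M] [AddCommGroup N]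
    [AddCommGroup P] [Module R M] [Module R N] [Module R P]
    (T : M →ₗ[R] P) (Y : M →ₗ[R] N) (C : N →ₗ[R] P) (F : N × M →ₗ[R] P × N)
    (hF : ∀ x y, F (x, y) = (-C x - T y - C (Y y), -x - Y y)) :
    Nonempty (LinearMap.ker F ≃ₗ[R] LinearMap.ker T) ∧
      (Function.Injective F ↔ Function.Injective T) := by
  let one := LinearEquiv.refl R N
  have F_eq : F = -(C.coprod (T + C ∘ₗ Y)).prod ((one : N →ₗ[R] N).coprod Y) := by
    refine LinearMap.ext fun ⟨x, y⟩ ↦ (hF x y).trans (Prod.ext ?_ ?_)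
    · change -C x - T y - C (Y y) = -(C x + (T y + C (Y y)))
      abel
    · change -x - Y y = -(x + Y y)
      abel
  have schur_eq : schurComplement C (T + C ∘ₗ Y) one Y = T := by
    ext
    simp [schurComplement, one]
  have e : LinearMap.ker F ≃ₗ[R] LinearMap.ker T := by
    have e' := kerBlockEquivKerSchurComplement C (T + C ∘ₗ Y) one Y
    rwa [schur_eq, ← LinearMap.ker_neg, ← F_eq] at e'
  exact ⟨⟨e⟩, injective_iff_injective_of_ker_equiv e.toEquiv⟩

/-- Proposition 5.5(2): the kernel of `F` is isomorphic to the kernel of `T`;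
in particular `F` is injective iff `T` is injective. -/
theorem stmt_2 (R : Type*) [CommRing R] (M : Type*) [AddCommGroup M] [Module R M]
    (T Y : M →ₗ[R] M) (c : R)
    (F : M × M →ₗ[R] M × M)
    (hF : ∀ x y : M, F (x, y) = (-(c • x) - T y - c • (Y y), -x - Y y)) :
    Nonempty ((LinearMap.ker F) ≃ₗ[R] (LinearMap.ker T)) ∧
      (Function.Injective F ↔ Function.Injective T) :=
  stmt_2_general T Y (c • LinearMap.id) F hF
end

section
/- Let T, S : Matrix ℕ ℕ ℤ. Define X : Matrix ℕ ℕ ℤ by X k l = 1 if |k − l| = 1 and X k l = 0 otherwise, let |T| and |S| denote the entrywise absolute values of T and S, and set Y = 2 • |T| + |S| + X. Let N = Matrix.fromBlocks (2 • 1) (T + Y) 1 (1 + Y) and M = Matrix.fromBlocks (3 • 1) (S + 2 • Y) 1 (1 + Y), matrices indexed by ℕ ⊕ ℕ with entries in ℤ. Then every entry of N is nonnegative, and for all indices i, j : ℕ ⊕ ℕ one has N i j = 0 if and only if M i j = 0. -/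
/-!
Since `Y` dominates both `2 • |T|` and `|S|` entrywise, the entries of `T + Y` are at least half of
those of `Y`, and the entries of `S + 2 • Y` are at least those of `Y`. So these two blocks vanish
exactly where `Y` does, while the remaining blocks of `N` and `M` agree up to nonzero factors.
-/

section LinearOrderedAddCommGroup

variable {G : Type*} [AddCommGroup G] [LinearOrder G] [IsOrderedAddMonoid G] {a b : G}

theorem add_eq_zero_iff_of_two_nsmul_abs_le (h : 2 • |a| ≤ b) : a + b = 0 ↔ b = 0 := by
  constructor
  · intro hab
    obtain rfl : b = -a := eq_neg_of_add_eq_zero_right hab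
    have two_abs_le_abs : |a| + |a| ≤ |a| := by
      simpa only [two_nsmul] using h.trans (neg_le_abs a)
    have abs_nonpos : |a| ≤ 0 := by simpa only [add_le_iff_nonpos_right] using two_abs_le_abs
    rw [abs_nonpos_iff.mp abs_nonpos, neg_zero]
  · rintro rfl
    have abs_nonpos : |a| ≤ 0 := (nsmul_nonpos_iff two_ne_zero).mp h
    rw [abs_nonpos_iff.mp abs_nonpos, add_zero]

theorem add_two_nsmul_eq_zero_iff_of_abs_le (h : |a| ≤ b) : a + 2 • b = 0 ↔ b = 0 :=
  (add_eq_zero_iff_of_two_nsmul_abs_le (nsmul_le_nsmul_right h 2)).trans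
    (nsmul_eq_zero_iff_right two_ne_zero)

end LinearOrderedAddCommGroup

theorem stmt_4_general {n R : Type*} [DecidableEq n] [Ring R] [LinearOrder R] [IsOrderedRing R]
    {T S Y : Matrix n n R} (hTY : ∀ k l, 2 • |T k l| ≤ Y k l) (hSY : ∀ k l, |S k l| ≤ Y k l)
    {N M : Matrix (n ⊕ n) (n ⊕ n) R}
    (hN : N = Matrix.fromBlocks (2 • 1) (T + Y) 1 (1 + Y))
    (hM : M = Matrix.fromBlocks (3 • 1) (S + 2 • Y) 1 (1 + Y)) :
    (∀ i j, 0 ≤ N i j) ∧ (∀ i j, N i j = 0 ↔ M i j = 0) := by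
  subst hN hM
  have one_nonneg (k l : n) : 0 ≤ (1 : Matrix n n R) k l := Matrix.zero_le_one_elem k l
  have abs_T_le (k l : n) : |T k l| ≤ Y k l :=
    (le_self_nsmul (abs_nonneg _) two_ne_zero).trans (hTY k l)
  have Y_nonneg (k l : n) : 0 ≤ Y k l := (abs_nonneg _).trans (hSY k l)
  constructor
  · rintro (k | k) (l | l)
    · exact nsmul_nonneg (one_nonneg k l) 2
    · exact neg_le_iff_add_nonneg.mp (neg_le_of_abs_le (abs_T_le k l))
    · exact one_nonneg k l
    · exact add_nonneg (one_nonneg k l) (Y_nonneg k l)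
  · rintro (k | k) (l | l)
    · exact (nsmul_eq_zero_iff_right two_ne_zero).trans
        (nsmul_eq_zero_iff_right three_ne_zero).symm
    · exact (add_eq_zero_iff_of_two_nsmul_abs_le (hTY k l)).trans
        (add_two_nsmul_eq_zero_iff_of_abs_le (hSY k l)).symm
    · rfl
    · rfl

/-- The matrices `N` and `M` of Construction 5.4: `N` has nonnegative entries, and
`N i j = 0 ↔ M i j = 0` for all indices (Proposition 5.5(1)). -/
theorem stmt_4 (T S : Matrix ℕ ℕ ℤ)
    (X : Matrix ℕ ℕ ℤ)
    (hX : ∀ k l : ℕ, X k l = if |(k : ℤ) - (l : ℤ)| = 1 then 1 else 0)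
    (Tabs Sabs : Matrix ℕ ℕ ℤ)
    (hT : ∀ k l : ℕ, Tabs k l = |T k l|)
    (hS : ∀ k l : ℕ, Sabs k l = |S k l|)
    (Y : Matrix ℕ ℕ ℤ) (hY : Y = 2 • Tabs + Sabs + X)
    (N M : Matrix (ℕ ⊕ ℕ) (ℕ ⊕ ℕ) ℤ)
    (hN : N = Matrix.fromBlocks (2 • (1 : Matrix ℕ ℕ ℤ)) (T + Y) 1 (1 + Y))
    (hM : M = Matrix.fromBlocks (3 • (1 : Matrix ℕ ℕ ℤ)) (S + 2 • Y) 1 (1 + Y)) :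
    (∀ i j : ℕ ⊕ ℕ, 0 ≤ N i j) ∧ (∀ i j : ℕ ⊕ ℕ, N i j = 0 ↔ M i j = 0) := by
  have X_nonneg (k l : ℕ) : 0 ≤ X k l := by rw [hX]; positivity
  have Y_apply (k l : ℕ) : Y k l = 2 • |T k l| + (|S k l| + X k l) := by
    simp only [hY, Matrix.add_apply, Matrix.smul_apply, hT, hS, add_assoc]
  refine stmt_4_general (fun k l => ?_) (fun k l => ?_) hN hM <;> rw [Y_apply]
  · exact le_add_of_nonneg_right (add_nonneg (abs_nonneg _) (X_nonneg k l))
  · exact le_add_of_nonneg_of_le (nsmul_nonneg (abs_nonneg _) 2)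
      (le_add_of_nonneg_right (X_nonneg k l))
end

section
/- Define X : Matrix ℕ ℕ ℤ by X k l = 1 if |k − l| = 1 and X k l = 0 otherwise, and let A = Matrix.fromBlocks 1 X 1 X, a matrix indexed by ℕ ⊕ ℕ with entries in ℤ. Then the directed graph on vertex set ℕ ⊕ ℕ with an edge from i to j whenever A i j ≠ 0 is strongly connected: for all vertices i, j there exist n : ℕ and vertices v₀ = i, v₁, …, vₙ = j with A v_k v_{k+1} ≠ 0 for every k < n. -/
/-!
In a block matrix `fromBlocks A B C D`, a nonzero entry in each row of `B` gives an edge from every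
vertex of the first summand into the second, and a nonzero entry in each column of `C` gives an edge
back to every vertex of the first summand. So strong connectivity of the digraph of `D` spreads to
the whole digraph, whatever `A` is. For `D = X` the digraph is the two-way infinite path
`0 ⇄ 1 ⇄ 2 ⇄ ⋯`.
-/

open Matrix Relation

theorem exists_walk_of_reflTransGen {V : Type*} {r : V → V → Prop} {a b : V}
    (h : ReflTransGen r a b) :
    ∃ (n : ℕ) (v : ℕ → V), v 0 = a ∧ v n = b ∧ ∀ k < n, r (v k) (v (k + 1)) := by
  induction h using ReflTransGen.head_induction_on with
  | refl => exact ⟨0, fun _ => b, rfl, rfl, fun _ hk => absurd hk (Nat.not_lt_zero _)⟩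
  | @head a c hac _ ih =>
    obtain ⟨n, v, rfl, hn, hv⟩ := ih
    refine ⟨n + 1, fun k => Nat.casesOn k a v, rfl, hn, ?_⟩
    rintro (_ | k) hk
    · exact hac
    · exact hv k (Nat.lt_of_succ_lt_succ hk)

section FromBlocks

variable {m n R : Type*} [Zero R]
  {A : Matrix m m R} {B : Matrix m n R} {C : Matrix n m R} {D : Matrix n n R}

theorem reflTransGen_fromBlocks_inr_inr {k l : n} (h : ReflTransGen (D · · ≠ 0) k l) :
    ReflTransGen (fromBlocks A B C D · · ≠ 0) (.inr k) (.inr l) :=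
  h.lift Sum.inr fun _ _ hkl => hkl

theorem exists_reflTransGen_fromBlocks_to_inr (hB : ∀ i, ∃ k, B i k ≠ 0) (i : m ⊕ n) :
    ∃ k, ReflTransGen (fromBlocks A B C D · · ≠ 0) i (.inr k) := by
  rcases i with i | k
  · obtain ⟨k, hk⟩ := hB i
    exact ⟨k, .single hk⟩
  · exact ⟨k, .refl⟩

theorem exists_reflTransGen_fromBlocks_from_inr (hC : ∀ j, ∃ l, C l j ≠ 0) (j : m ⊕ n) :
    ∃ l, ReflTransGen (fromBlocks A B C D · · ≠ 0) (.inr l) j := by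
  rcases j with j | l
  · obtain ⟨l, hl⟩ := hC j
    exact ⟨l, .single hl⟩
  · exact ⟨l, .refl⟩

theorem stmt_5_general (hB : ∀ i, ∃ k, B i k ≠ 0) (hC : ∀ j, ∃ l, C l j ≠ 0)
    (hD : ∀ k l, ReflTransGen (D · · ≠ 0) k l) (i j : m ⊕ n) :
    ∃ (N : ℕ) (v : ℕ → m ⊕ n), v 0 = i ∧ v N = j ∧
      ∀ k < N, fromBlocks A B C D (v k) (v (k + 1)) ≠ 0 := by
  obtain ⟨k, hik⟩ := exists_reflTransGen_fromBlocks_to_inr (A := A) (C := C) (D := D) hB i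
  obtain ⟨l, hlj⟩ := exists_reflTransGen_fromBlocks_from_inr (A := A) (B := B) (D := D) hC j
  exact exists_walk_of_reflTransGen
    ((hik.trans (reflTransGen_fromBlocks_inr_inr (hD k l))).trans hlj)

end FromBlocks

/-- Remark 5.7 / Proposition 5.8: the directed graph on `ℕ ⊕ ℕ` whose adjacency matrix is
`fromBlocks 1 X 1 X` is strongly connected. -/
theorem stmt_5 (X : Matrix ℕ ℕ ℤ)
    (hX : ∀ k l : ℕ, X k l = if |(k : ℤ) - (l : ℤ)| = 1 then 1 else 0)
    (A : Matrix (ℕ ⊕ ℕ) (ℕ ⊕ ℕ) ℤ)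
    (hA : A = Matrix.fromBlocks (1 : Matrix ℕ ℕ ℤ) X 1 X) :
    ∀ i j : ℕ ⊕ ℕ, ∃ (n : ℕ) (v : ℕ → ℕ ⊕ ℕ), v 0 = i ∧ v n = j ∧
      ∀ k < n, A (v k) (v (k + 1)) ≠ 0 := by
  have next_ne_zero (k : ℕ) : X k (k + 1) ≠ 0 := by simp [hX]
  have prev_ne_zero (k : ℕ) : X (k + 1) k ≠ 0 := by simp [hX]
  have path_connected (k l : ℕ) : ReflTransGen (X · · ≠ 0) k l :=
    reflTransGen_of_succ _ (fun i _ => next_ne_zero i) fun i _ => prev_ne_zero i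
  subst hA
  exact stmt_5_general (fun k => ⟨k + 1, next_ne_zero k⟩) (fun k => ⟨k, by simp⟩) path_connected
end

section
/- Let V be a type with a quiver structure, let v : V, and let F be a finite set of finite paths starting at v (elements of the sigma type Σ w, Quiver.Path v w) such that every finite path starting at v has a common extension with some element of F (i.e. F is exhaustive). Let n be the maximum of the lengths of the paths in F. Then every path q starting at v with q.length = n satisfies λ ≤ q for some λ ∈ F, i.e. q = λ.comp w for some λ ∈ F and some path w. -/
universe u

open Quiver (Path)

section Prefix

variable {V : Type*} [Quiver V] {a b c d : V}

/-- The path `p` is an initial segment of the path `q`, written `p ≤ q` in the paper. The two paths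
may end at different vertices. -/
def IsPathPrefix (p : Path a b) (q : Path a c) : Prop :=
  ∃ w : Path b c, q = p.comp w

namespace IsPathPrefix

theorem of_cons {p : Path a b} {q : Path a c} {e : c ⟶ d} (h : IsPathPrefix p (q.cons e))
    (hlen : p.length ≤ q.length) : IsPathPrefix p q := by
  obtain ⟨w, hw⟩ := h
  cases w with
  | nil =>
    have length_eq : q.length + 1 = p.length := congrArg Path.length hw
    omega
  | cons w f =>
    rw [Path.comp_cons] at hw
    obtain rfl := Path.obj_eq_of_cons_eq_cons hw
    exact ⟨w, eq_of_heq (Path.heq_of_cons_eq_cons hw)⟩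

theorem of_comp {p : Path a b} {q : Path a c} {w : Path c d} (h : IsPathPrefix p (q.comp w))
    (hlen : p.length ≤ q.length) : IsPathPrefix p q := by
  induction w with
  | nil => exact h
  | cons w e ih =>
    have hlen_comp : p.length ≤ (q.comp w).length := by
      rw [Path.length_comp]
      omega
    exact ih (h.of_cons hlen_comp)

end IsPathPrefix

/-- The paths `p` and `q` are initial segments of a common path `r`. -/
def HasCommonExtension (p : Path a b) (q : Path a c) : Prop :=
  ∃ (d : V) (r : Path a d) (w₁ : Path b d) (w₂ : Path c d), r = p.comp w₁ ∧ r = q.comp w₂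

theorem HasCommonExtension.isPathPrefix_of_length_le {p : Path a b} {q : Path a c}
    (h : HasCommonExtension p q) (hlen : q.length ≤ p.length) : IsPathPrefix q p := by
  obtain ⟨d, r, w₁, w₂, rfl, hr⟩ := h
  exact IsPathPrefix.of_comp ⟨w₂, hr⟩ hlen

/-- A set `F` of paths out of `a` is exhaustive if every path out of `a` has a common extension
with some element of `F`. -/
def IsExhaustive (F : Set (Σ w : V, Path a w)) : Prop :=
  ∀ p : Σ w : V, Path a w, ∃ l ∈ F, HasCommonExtension p.2 l.2

theorem stmt_11_general {F : Set (Σ w : V, Path a w)} (hF : IsExhaustive F) (q : Path a c)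
    (hlen : ∀ l ∈ F, l.2.length ≤ q.length) : ∃ l ∈ F, IsPathPrefix l.2 q := by
  obtain ⟨l, hl, hext⟩ := hF ⟨c, q⟩
  exact ⟨l, hl, hext.isPathPrefix_of_length_le (hlen l hl)⟩

end Prefix

/-- The intermediate claim in the verification of (S4) in Proposition 4.7: if `F` is a
finite exhaustive set of paths out of `v` and `n` is the maximal length occurring in `F`,
then every path out of `v` of length `n` extends an element of `F`. -/
theorem stmt_11 {V : Type u} [Quiver.{u + 1} V] (v : V)
    (F : Set (Σ w : V, Quiver.Path v w)) (hFfin : F.Finite)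
    (hex : ∀ p : Σ w : V, Quiver.Path v w, ∃ l ∈ F, ∃ (d : V) (r : Quiver.Path v d)
      (w₁ : Quiver.Path p.1 d) (w₂ : Quiver.Path l.1 d),
        r = p.2.comp w₁ ∧ r = l.2.comp w₂)
    (n : ℕ)
    (hn : IsGreatest {k : ℕ | ∃ l ∈ F, (l.2 : Quiver.Path v l.1).length = k} n)
    {c : V} (q : Quiver.Path v c) (hq : q.length = n) :
    ∃ l ∈ F, ∃ w : Quiver.Path l.1 c, q = l.2.comp w :=
  stmt_11_general hex q fun l hl ↦ hq ▸ hn.2 ⟨l, hl, rfl⟩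
end
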